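/- arXiv:1404.0587 — 3 statements merged into one kernel-verified Lean document; each statement's English description precedes it below -/
import Mathlib

section
/- (Structure part of Proposition 1.) Let m, n ≥ 1, let w_x : Fin m → ℝ and w_y : Fin n → ℝ be positive element widths and heights of a tensor-product rectangular grid, let α > 0, let β = (b₁, b₂) ∈ ℝ² be a constant convective field, and let γ̄ : Fin m × Fin n → ℝ satisfy γ̄(i,j) > 0 for all (i,j). For each edge e of the grid define: for the vertical edge between horizontally adjacent elements (i,j) and (i+1,j), d_e = (w_x i + w_x(i+1))/2, |e| = w_y j, Pe_e = |b₁| d_e/(2α); for the horizontal edge between vertically adjacent elements (i,j) and (i,j+1), d_e = (w_y j + w_y(j+1))/2, |e| = w_x i, Pe_e = |b₂| d_e/(2α); for a boundary edge of element (i,j), d_e = w_x i/2 (left/right boundary edge, |e| = w_y j, Pe_e = |b₁| d_e/(2α)) or d_e = w_y j/2 (bottom/top boundary edge, |e| = w_x i, Pe_e = |b₂| d_e/(2α)). Let ρ_e ≥ max(Pe_e − 1, 0) be given for every edge e. Define the stiffness matrix K indexed by Fin m × Fin n as follows: K_{(i,j),(i+1,j)} = (−α(1+ρ_e)/d_e +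 b₁/2)·w_y j and K_{(i+1,j),(i,j)} = (−α(1+ρ_e)/d_e − b₁/2)·w_y j for each vertical interior edge e; K_{(i,j),(i,j+1)} = (−α(1+ρ_e)/d_e + b₂/2)·w_x i and K_{(i,j+1),(i,j)} = (−α(1+ρ_e)/d_e − b₂/2)·w_x i for each horizontal interior edge e; all other off-diagonal entries are zero; and K_{(i,j),(i,j)} = Σ_{e incident to (i,j)} (α(1+ρ_e)/d_e + β·n_e/2)·|e| + γ̄(i,j)·w_x i·w_y j, where n_e is the outward unit normal of element (i,j) on edge e (so the β·n_e contributions over opposite edges cancel). Then every off-diagonal entry of K is nonpositive, every diagonal entry of K is positive, and K is strictly diagonally dominant with respect to its columns: for every index c, K_{c,c} > Σ_{r ≠ c} |K_{r,c}|. -/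
open Finset

/-- Distance `d_e` associated with the grid line at index `k ∈ {0, …, m}` of a 1D
partition with `m` element widths `w 0, …, w (m-1)`: half the first (resp. last) element
width for the boundary lines `k = 0` (resp. `k = m`), and the average
`(w (k-1) + w k)/2` of the two adjacent element widths for interior lines. -/
noncomputable def dEdge (w : ℕ → ℝ) (m k : ℕ) : ℝ :=
  if k = 0 then w 0 / 2
  else if k = m then w (m - 1) / 2
  else (w (k - 1) + w k) / 2

/-- The stiffness matrix of the stabilized dual mixed-finite volume (MFV) scheme on an
`m × n` tensor-product rectangular grid with element widths `wx` and heights `wy`,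
diffusion coefficient `α`, constant convective field `β = (b₁, b₂)`, elementwise mean
reaction coefficients `γ`, and artificial viscosities `ρv k j` (on the vertical edge
lying on grid line `k ∈ {0, …, m}` in row `j`) and `ρh k i` (on the horizontal edge lying
on grid line `k ∈ {0, …, n}` in column `i`).

The diagonal entry of element `(i,j)` collects the contributions
`(α(1+ρ_e)/d_e + β·n_e/2)·|e|` of its four incident edges (outward normals
`∓x, ∓y`) plus `γ̄(i,j)·|K|`; the off-diagonal entries are
`(-α(1+ρ_e)/d_e + β·n_e/2)·|e|` for each pair of adjacent elements, and all remaining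
entries vanish. -/
noncomputable def mfvMatrix (m n : ℕ) (α b₁ b₂ : ℝ) (wx wy : ℕ → ℝ)
    (γ ρv ρh : ℕ → ℕ → ℝ) :
    Matrix (Fin m × Fin n) (Fin m × Fin n) ℝ := fun p q =>
  let i : ℕ := p.1
  let j : ℕ := p.2
  let dv : ℕ → ℝ := dEdge wx m
  let dh : ℕ → ℝ := dEdge wy n
  if p = q then
    -- left, right, bottom and top edge contributions, plus the reaction term
    (α * (1 + ρv i j) / dv i + (-b₁) / 2) * wy j
      + (α * (1 + ρv (i + 1) j) / dv (i + 1) + b₁ / 2) * wy j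
      + (α * (1 + ρh j i) / dh j + (-b₂) / 2) * wx i
      + (α * (1 + ρh (j + 1) i) / dh (j + 1) + b₂ / 2) * wx i
      + γ i j * (wx i * wy j)
  else if p.2 = q.2 ∧ (q.1 : ℕ) = i + 1 then
    -- K_{(i,j),(i+1,j)}, across the vertical edge on grid line i+1
    (-(α * (1 + ρv (i + 1) j)) / dv (i + 1) + b₁ / 2) * wy j
  else if p.2 = q.2 ∧ i = (q.1 : ℕ) + 1 then
    -- K_{(i+1,j),(i,j)}, across the vertical edge on grid line i (= p.1)
    (-(α * (1 + ρv i j)) / dv i - b₁ / 2) * wy j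
  else if p.1 = q.1 ∧ (q.2 : ℕ) = j + 1 then
    -- K_{(i,j),(i,j+1)}, across the horizontal edge on grid line j+1
    (-(α * (1 + ρh (j + 1) i)) / dh (j + 1) + b₂ / 2) * wx i
  else if p.1 = q.1 ∧ j = (q.2 : ℕ) + 1 then
    -- K_{(i,j+1),(i,j)}, across the horizontal edge on grid line j (= p.2)
    (-(α * (1 + ρh j i)) / dh j - b₂ / 2) * wx i
  else 0

lemma dEdge_pos (w : ℕ → ℝ) (m k : ℕ) (hm : 1 ≤ m) (hw : ∀ i < m, 0 < w i) (hk : k ≤ m) :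
    0 < dEdge w m k := by
  unfold dEdge
  split_ifs with h1 h2
  · have := hw 0 (by omega)
    linarith
  · have := hw (m - 1) (by omega)
    linarith
  · have := hw (k - 1) (by omega)
    have := hw k (by omega)
    linarith

lemma edge_bound (α b d ρ : ℝ) (hα : 0 < α) (hd : 0 < d)
    (h : max (|b| * d / (2 * α) - 1) 0 ≤ ρ) : |b| / 2 ≤ α * (1 + ρ) / d := by
  have h1 : |b| * d / (2 * α) ≤ 1 + ρ := by
    have := (le_max_left _ _).trans h
    linarith
  rw [div_le_iff₀ (by positivity)] at h1
  rw [le_div_iff₀ hd]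
  linarith

lemma sum_ind_le {ι : Type*} [Fintype ι] (P : ι → Prop) [DecidablePred P] (L : ℝ) (hL : 0 ≤ L)
    (hP : ∀ a b, P a → P b → a = b) : ∑ r, (if P r then L else 0) ≤ L := by
  rw [← Finset.sum_filter, Finset.sum_const, nsmul_eq_mul]
  have h : (Finset.univ.filter P).card ≤ 1 := by
    rw [Finset.card_le_one]
    intro a ha b hb
    exact hP a b (Finset.mem_filter.1 ha).2 (Finset.mem_filter.1 hb).2
  have h' : ((Finset.univ.filter P).card : ℝ) ≤ 1 := by exact_mod_cast h
  nlinarith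

/-- structure part of Proposition 1. On a tensor-product rectangular
grid with positive element widths and heights, with `α > 0`, constant convective field
`β = (b₁, b₂)`, positive elementwise reaction means `γ̄`, and edge artificial viscosities
satisfying `ρ_e ≥ max (Pe_e - 1) 0` with local Péclet number `Pe_e = |β·n_e| d_e/(2α)`,
the stabilized MFV stiffness matrix `K` has nonpositive off-diagonal entries, positive
diagonal entries, and is strictly diagonally dominant with respect to its columns:
`K_{c,c} > ∑_{r ≠ c} |K_{r,c}|` for every index `c`. -/
theorem mfvMatrix_structure (m n : ℕ) (hm : 1 ≤ m) (hn : 1 ≤ n)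
    (α b₁ b₂ : ℝ) (hα : 0 < α)
    (wx wy : ℕ → ℝ) (hwx : ∀ i < m, 0 < wx i) (hwy : ∀ j < n, 0 < wy j)
    (γ : ℕ → ℕ → ℝ) (hγ : ∀ i < m, ∀ j < n, 0 < γ i j)
    (ρv ρh : ℕ → ℕ → ℝ)
    (hρv : ∀ k ≤ m, ∀ j < n, max (|b₁| * dEdge wx m k / (2 * α) - 1) 0 ≤ ρv k j)
    (hρh : ∀ k ≤ n, ∀ i < m, max (|b₂| * dEdge wy n k / (2 * α) - 1) 0 ≤ ρh k i) :
    (∀ p q, p ≠ q → mfvMatrix m n α b₁ b₂ wx wy γ ρv ρh p q ≤ 0) ∧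
    (∀ p, 0 < mfvMatrix m n α b₁ b₂ wx wy γ ρv ρh p p) ∧
    (∀ c, ∑ r ∈ Finset.univ.erase c, |mfvMatrix m n α b₁ b₂ wx wy γ ρv ρh r c| <
      mfvMatrix m n α b₁ b₂ wx wy γ ρv ρh c c) := by
  have hv : ∀ k ≤ m, ∀ j < n, |b₁| / 2 ≤ α * (1 + ρv k j) / dEdge wx m k := fun k hk j hj =>
    edge_bound _ _ _ _ hα (dEdge_pos wx m k hm hwx hk) (hρv k hk j hj)
  have hh : ∀ k ≤ n, ∀ i < m, |b₂| / 2 ≤ α * (1 + ρh k i) / dEdge wy n k := fun k hk i hi =>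
    edge_bound _ _ _ _ hα (dEdge_pos wy n k hn hwy hk) (hρh k hk i hi)
  have b1a := le_abs_self b₁
  have b1b := neg_le_abs b₁
  have b2a := le_abs_self b₂
  have b2b := neg_le_abs b₂
  have hoff : ∀ p q, p ≠ q → mfvMatrix m n α b₁ b₂ wx wy γ ρv ρh p q ≤ 0 := by
    rintro ⟨⟨i, hi⟩, ⟨j, hj⟩⟩ ⟨⟨k, hk⟩, ⟨l, hl⟩⟩ hpq
    have wi := hwx i hi
    have wj := hwy j hj
    have e1 := hv i (by omega) j hj
    have e2 := hv (i + 1) (by omega) j hj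
    have e3 := hh j (by omega) i hi
    have e4 := hh (j + 1) (by omega) i hi
    simp only [mfvMatrix, if_neg hpq, neg_div]
    split_ifs
    · exact mul_nonpos_of_nonpos_of_nonneg (by linarith) wj.le
    · exact mul_nonpos_of_nonpos_of_nonneg (by linarith) wj.le
    · exact mul_nonpos_of_nonpos_of_nonneg (by linarith) wi.le
    · exact mul_nonpos_of_nonpos_of_nonneg (by linarith) wi.le
    · exact le_rfl
  have hdom : ∀ c, ∑ r ∈ Finset.univ.erase c, |mfvMatrix m n α b₁ b₂ wx wy γ ρv ρh r c| <
      mfvMatrix m n α b₁ b₂ wx wy γ ρv ρh c c := by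
    rintro ⟨⟨i, hi⟩, ⟨j, hj⟩⟩
    have wi := hwx i hi
    have wj := hwy j hj
    have e1 := hv i (by omega) j hj
    have e2 := hv (i + 1) (by omega) j hj
    have e3 := hh j (by omega) i hi
    have e4 := hh (j + 1) (by omega) i hi
    have hg : 0 < γ i j * (wx i * wy j) := mul_pos (hγ i hi j hj) (mul_pos wi wj)
    obtain ⟨L, hL⟩ : ∃ L, L = (α * (1 + ρv i j) / dEdge wx m i + (-b₁) / 2) * wy j := ⟨_, rfl⟩
    obtain ⟨R, hR⟩ : ∃ R, R = (α * (1 + ρv (i + 1) j) / dEdge wx m (i + 1) + b₁ / 2) * wy j :=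
      ⟨_, rfl⟩
    obtain ⟨B, hB⟩ : ∃ B, B = (α * (1 + ρh j i) / dEdge wy n j + (-b₂) / 2) * wx i := ⟨_, rfl⟩
    obtain ⟨T, hT⟩ : ∃ T, T = (α * (1 + ρh (j + 1) i) / dEdge wy n (j + 1) + b₂ / 2) * wx i :=
      ⟨_, rfl⟩
    have L0 : 0 ≤ L := hL ▸ mul_nonneg (by linarith) wj.le
    have R0 : 0 ≤ R := hR ▸ mul_nonneg (by linarith) wj.le
    have B0 : 0 ≤ B := hB ▸ mul_nonneg (by linarith) wi.le
    have T0 : 0 ≤ T := hT ▸ mul_nonneg (by linarith) wi.le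
    have hdiag : mfvMatrix m n α b₁ b₂ wx wy γ ρv ρh (⟨i, hi⟩, ⟨j, hj⟩) (⟨i, hi⟩, ⟨j, hj⟩)
        = L + R + B + T + γ i j * (wx i * wy j) := by
      simp only [mfvMatrix, if_true, hL, hR, hB, hT]
    rw [hdiag]
    let F : Fin m × Fin n → ℝ := fun r =>
      (if (r.2 : ℕ) = j ∧ i = (r.1 : ℕ) + 1 then L else 0)
      + (if (r.2 : ℕ) = j ∧ (r.1 : ℕ) = i + 1 then R else 0)
      + (if (r.1 : ℕ) = i ∧ j = (r.2 : ℕ) + 1 then B else 0)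
      + (if (r.1 : ℕ) = i ∧ (r.2 : ℕ) = j + 1 then T else 0)
    have hF0 : ∀ r, 0 ≤ F r := by
      intro r
      have (P : Prop) [Decidable P] (x : ℝ) (hx : 0 ≤ x) : 0 ≤ if P then x else 0 := by
        split_ifs <;> simp [hx]
      exact add_nonneg (add_nonneg (add_nonneg (this _ _ L0) (this _ _ R0)) (this _ _ B0))
        (this _ _ T0)
    have h1 : ∑ r ∈ Finset.univ.erase ((⟨i, hi⟩, ⟨j, hj⟩) : Fin m × Fin n),
        |mfvMatrix m n α b₁ b₂ wx wy γ ρv ρh r (⟨i, hi⟩, ⟨j, hj⟩)| ≤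
        ∑ r ∈ Finset.univ.erase ((⟨i, hi⟩, ⟨j, hj⟩) : Fin m × Fin n), F r := by
      apply Finset.sum_le_sum
      intro r hr
      have hne := Finset.ne_of_mem_erase hr
      have hr0 := hF0 r
      have hne2 : ∀ x : ℕ, ¬ (x = x + 1 + 1) := fun x => by omega
      rw [abs_of_nonpos (hoff _ _ hne)]
      obtain ⟨⟨k, hk⟩, ⟨l, hl⟩⟩ := r
      simp only [mfvMatrix, if_neg hne, Fin.mk.injEq]
      split_ifs with c1 c2 c3 c4
      · obtain ⟨rfl, rfl⟩ := c1
        simp [F, hne2]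
        rw [hL]
        apply le_of_eq
        ring
      · obtain ⟨rfl, rfl⟩ := c2
        simp [F, hne2]
        rw [hR]
        apply le_of_eq
        ring
      · obtain ⟨rfl, rfl⟩ := c3
        simp [F, hne2]
        rw [hB]
        apply le_of_eq
        ring
      · obtain ⟨rfl, rfl⟩ := c4
        simp [F, hne2]
        rw [hT]
        apply le_of_eq
        ring
      · simpa using hr0
    have h2 : ∑ r ∈ Finset.univ.erase ((⟨i, hi⟩, ⟨j, hj⟩) : Fin m × Fin n), F r ≤ ∑ r, F r :=
      Finset.sum_le_sum_of_subset_of_nonneg (Finset.erase_subset _ _) (fun r _ _ => hF0 r)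
    have h3 : ∑ r, F r ≤ L + R + B + T := by
      simp only [F, Finset.sum_add_distrib]
      refine add_le_add (add_le_add (add_le_add ?_ ?_) ?_) ?_ <;>
      · apply sum_ind_le _ _ (by assumption)
        intro a b ha hb
        apply Prod.ext <;> apply Fin.ext <;> omega
    linarith
  exact ⟨hoff, fun p => lt_of_le_of_lt (Finset.sum_nonneg fun _ _ => abs_nonneg _) (hdom p), hdom⟩
end

section
/- (Consequence of Proposition 2: discrete maximum principle for the upwind-stabilized PM scheme.) Let N ≥ 2, ε_i > 0, h_i > 0, β_i ∈ ℝ for i = 1, …, N, and let M^stab ∈ ℝ^{(N−1)×(N−1)} be the tridiagonal matrix with entries M^stab_{i,i−1} = −ε_i/h_i − β_i⁺, M^stab_{i,i} = ε_i/h_i + ε_{i+1}/h_{i+1} + β_{i+1}⁺ − β_i⁻, M^stab_{i,i+1} = −ε_{i+1}/h_{i+1} + β_{i+1}⁻, and zero otherwise, where β⁺ = max(β,0) and β⁻ = min(β,0). Then M^stab is invertible and every entry of (M^stab)⁻¹ is nonnegative; in particular, if M^stab U = F with F entrywise nonnegative, then U is entrywise nonnegative. -/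
open Finset

/-- The stiffness matrix `M^stab` of the upwind-stabilized Primal Mixed (PM) finite
element scheme for the 1D advection–diffusion problem on a partition of `(0, L)` into `N`
intervals of lengths `h 1, …, h N`, with elementwise diffusion coefficients `ε i` and
advection coefficients `β i` (`i = 1, …, N`). It is the `(N-1) × (N-1)` tridiagonal
matrix (rows/columns indexed by the interior nodes `1, …, N-1`) with entries
`M_{i,i-1} = -ε_i/h_i - β_i⁺`,
`M_{i,i} = ε_i/h_i + ε_{i+1}/h_{i+1} + β_{i+1}⁺ - β_i⁻`,
`M_{i,i+1} = -ε_{i+1}/h_{i+1} + β_{i+1}⁻`, and `M_{i,j} = 0` for `|i - j| ≥ 2`,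
where `β⁺ = max β 0` and `β⁻ = min β 0`. -/
noncomputable def pmMatrix (N : ℕ) (ε β h : ℕ → ℝ) :
    Matrix (Fin (N - 1)) (Fin (N - 1)) ℝ := fun a b =>
  let i : ℕ := (a : ℕ) + 1
  let j : ℕ := (b : ℕ) + 1
  if i = j then ε i / h i + ε (i + 1) / h (i + 1) + max (β (i + 1)) 0 - min (β i) 0
  else if i = j + 1 then -(ε i / h i) - max (β i) 0
  else if j = i + 1 then -(ε (i + 1) / h (i + 1)) + min (β (i + 1)) 0
  else 0

theorem pm_aux (N : ℕ) (p q u : ℕ → ℝ)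
    (hp : ∀ i, 1 ≤ i → i ≤ N → 0 < p i) (hq : ∀ i, 1 ≤ i → i ≤ N → 0 < q i)
    (h0 : u 0 = 0) (huN : u N = 0)
    (hJ : ∀ i, 1 ≤ i → i < N →
      p i * u (i - 1) - q i * u i ≤ p (i + 1) * u i - q (i + 1) * u (i + 1)) :
    ∀ i, 1 ≤ i → i < N → 0 ≤ u i := by
  intro i hi hiN
  by_contra! hneg
  rcases lt_or_ge 0 (p i * u (i - 1) - q i * u i) with hpos | hle
  · have key : ∀ k, i + k ≤ N → u (i + k) < 0 ∧
        0 < p (i + k) * u (i + k - 1) - q (i + k) * u (i + k) := by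
      intro k
      induction k with
      | zero => intro _; exact ⟨hneg, hpos⟩
      | succ k ih =>
        intro hk
        obtain ⟨h1, h2⟩ := ih (by omega)
        have h3 := hJ (i + k) (by omega) (by omega)
        have h4 := hp (i + k + 1) (by omega) (by omega)
        have h5 := hq (i + k + 1) (by omega) (by omega)
        rw [← add_assoc, Nat.add_sub_cancel]
        have h6 : 0 < p (i + k + 1) * u (i + k) - q (i + k + 1) * u (i + k + 1) := by linarith
        refine ⟨?_, h6⟩
        by_contra! h7
        nlinarith [mul_nonneg h5.le h7, mul_neg_of_pos_of_neg h4 h1]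
    have := (key (N - i) (by omega)).1
    rw [show i + (N - i) = N by omega, huN] at this
    exact lt_irrefl _ this
  · have key : ∀ k, k ≤ i → u k < 0 → (1 ≤ k → p k * u (k - 1) - q k * u k ≤ 0) → False := by
      intro k
      induction k with
      | zero => intro _ h1 _; rw [h0] at h1; exact lt_irrefl _ h1
      | succ k ih =>
        intro hk h1 h2
        have h2 := h2 (by omega)
        rw [Nat.add_sub_cancel] at h2
        have h4 := hp (k + 1) (by omega) (by omega)
        have h5 := hq (k + 1) (by omega) (by omega)
        refine ih (by omega) ?_ ?_
        · by_contra! h7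
          nlinarith [mul_nonneg h4.le h7, mul_neg_of_pos_of_neg h5 h1]
        · intro hk1
          have := hJ k hk1 (by omega)
          linarith
    exact key i le_rfl hneg (fun _ => hle)

theorem pm_mulVec (N : ℕ) (ε β h : ℕ → ℝ) (u : ℕ → ℝ) (h0 : u 0 = 0) (huN : u N = 0)
    (a : Fin (N - 1)) :
    (pmMatrix N ε β h).mulVec (fun b => u (b + 1)) a =
      (ε (a + 1) / h (a + 1) + ε (a + 1 + 1) / h (a + 1 + 1) + max (β (a + 1 + 1)) 0
        - min (β (a + 1)) 0) * u (a + 1)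
      + (-(ε (a + 1) / h (a + 1)) - max (β (a + 1)) 0) * u a
      + (-(ε (a + 1 + 1) / h (a + 1 + 1)) + min (β (a + 1 + 1)) 0) * u (a + 1 + 1) := by
  obtain ⟨a, ha⟩ := a
  simp only [Matrix.mulVec, dotProduct, pmMatrix]
  generalize (ε (a + 1) / h (a + 1) + ε (a + 1 + 1) / h (a + 1 + 1) + max (β (a + 1 + 1)) 0
        - min (β (a + 1)) 0) = A
  generalize (-(ε (a + 1) / h (a + 1)) - max (β (a + 1)) 0) = B
  generalize (-(ε (a + 1 + 1) / h (a + 1 + 1)) + min (β (a + 1 + 1)) 0) = C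
  rw [Fin.sum_univ_eq_sum_range (fun b => (if a + 1 = b + 1 then A else
    if a + 1 = b + 1 + 1 then B else if b + 1 = a + 1 + 1 then C else 0) * u (b + 1)) (N - 1)]
  have e : ∀ b ∈ Finset.range (N - 1), (if a + 1 = b + 1 then A else
    if a + 1 = b + 1 + 1 then B else if b + 1 = a + 1 + 1 then C else 0) * u (b + 1)
    = (if a = b then A * u (a + 1) else 0) + (if a - 1 = b then B * u a else 0)
      + (if a + 1 = b then C * u (a + 1 + 1) else 0) := by
    intro b _
    rcases Nat.eq_zero_or_pos a with rfl | ha0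
    · rcases b with _ | _ | b <;> simp [h0]
    · obtain ⟨c, rfl⟩ : ∃ c, a = c + 1 := ⟨a - 1, by omega⟩
      by_cases h1 : b = c
      · subst h1; simp; omega
      by_cases h2 : b = c + 1
      · subst h2; simp
      by_cases h3 : b = c + 1 + 1
      · subst h3; simp; omega
      · have : ¬ c = b := by omega
        have : ¬ c + 1 = b := by omega
        have : ¬ c + 1 + 1 = b := by omega
        have : ¬ b = c + 1 + 1 := by omega
        simp [*]
  rw [Finset.sum_congr rfl e, Finset.sum_add_distrib, Finset.sum_add_distrib,
    Finset.sum_ite_eq, Finset.sum_ite_eq, Finset.sum_ite_eq]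
  rw [if_pos (by simpa using ha), if_pos (by simp; omega)]
  split_ifs with h1
  · rfl
  · have : a + 1 + 1 = N := by simp at h1; omega
    rw [this, huN, mul_zero]

theorem pm_monotone (N : ℕ) (ε β h : ℕ → ℝ)
    (hε : ∀ i, 1 ≤ i → i ≤ N → 0 < ε i) (hh : ∀ i, 1 ≤ i → i ≤ N → 0 < h i)
    (U : Fin (N - 1) → ℝ) (hF : ∀ a, 0 ≤ (pmMatrix N ε β h).mulVec U a) : ∀ a, 0 ≤ U a := by
  let u : ℕ → ℝ := fun k => if hk : 1 ≤ k ∧ k < N then U ⟨k - 1, by omega⟩ else 0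
  have hU : U = fun b : Fin (N - 1) => u (b + 1) := by
    funext b
    have : 1 ≤ (b : ℕ) + 1 ∧ (b : ℕ) + 1 < N := by omega
    simp only [u, dif_pos this]
    rfl
  have h0 : u 0 = 0 := by simp [u]
  have hN : u N = 0 := by simp [u]
  have hpos : ∀ i, 1 ≤ i → i ≤ N → 0 < ε i / h i := fun i h1 h2 => div_pos (hε i h1 h2) (hh i h1 h2)
  have key := pm_aux N (fun i => ε i / h i + max (β i) 0) (fun i => ε i / h i - min (β i) 0) u
    (fun i h1 h2 => add_pos_of_pos_of_nonneg (hpos i h1 h2) (le_max_right _ _))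
    (fun i h1 h2 => by
      have := hpos i h1 h2
      have := min_le_right (β i) 0
      linarith) h0 hN ?_
  · intro a
    rw [hU]
    exact key (a + 1) (by omega) (by omega)
  · intro i h1 h2
    obtain ⟨c, rfl⟩ : ∃ c, i = c + 1 := ⟨i - 1, by omega⟩
    have := hF ⟨c, by omega⟩
    rw [hU, pm_mulVec N ε β h u h0 hN] at this
    simp only [Nat.add_sub_cancel] at this ⊢
    linarith

/-- consequence of Proposition 2: discrete maximum principle for the
upwind-stabilized PM scheme. Let `N ≥ 2`, `ε_i > 0`, `h_i > 0`, `β_i ∈ ℝ` for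
`i = 1, …, N`. Then `M^stab` is invertible and every entry of `(M^stab)⁻¹` is
nonnegative; in particular, if `M^stab U = F` with `F` entrywise nonnegative, then `U` is
entrywise nonnegative. -/
theorem pmMatrix_discrete_maximum_principle (N : ℕ) (hN : 2 ≤ N) (ε β h : ℕ → ℝ)
    (hε : ∀ i, 1 ≤ i → i ≤ N → 0 < ε i) (hh : ∀ i, 1 ≤ i → i ≤ N → 0 < h i) :
    IsUnit (pmMatrix N ε β h) ∧
    (∀ a b, 0 ≤ (pmMatrix N ε β h)⁻¹ a b) ∧
    (∀ U F : Fin (N - 1) → ℝ, (pmMatrix N ε β h).mulVec U = F →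
      (∀ a, 0 ≤ F a) → ∀ a, 0 ≤ U a) := by
  have hmono := pm_monotone N ε β h hε hh
  have hunit : IsUnit (pmMatrix N ε β h) := by
    rw [← Matrix.mulVec_injective_iff_isUnit]
    intro U V hUV
    have hUV : (pmMatrix N ε β h).mulVec U = (pmMatrix N ε β h).mulVec V := hUV
    funext a
    have h1 := hmono (U - V) (by intro a; rw [Matrix.mulVec_sub, hUV]; simp) a
    have h2 := hmono (V - U) (by intro a; rw [Matrix.mulVec_sub, hUV]; simp) a
    simp only [Pi.sub_apply] at h1 h2
    linarith
  refine ⟨hunit, ?_, ?_⟩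
  · intro a b
    refine hmono (fun a => (pmMatrix N ε β h)⁻¹ a b) ?_ a
    intro c
    have h1 := Matrix.mul_nonsing_inv _ ((Matrix.isUnit_iff_isUnit_det _).1 hunit)
    have h2 := congrFun (congrFun h1 c) b
    rw [Matrix.mul_apply] at h2
    simp only [Matrix.mulVec, dotProduct]
    rw [h2, Matrix.one_apply]
    split_ifs <;> norm_num
  · intro U F hUF hF
    exact hmono U (by rw [hUF]; exact hF)
end

section
/- (Junction value on the three-segment network.) Let ε > 0, β₁, β₂, β₃ > 0 and L₁, L₂, L₃ > 0, and let B(x) = x/(exp(x) − 1) denote the inverse of the Bernoulli function. For ω ∈ ℝ define the segment fluxes J₁ = β₁·(1·exp(β₁L₁/ε) − ω)/(exp(β₁L₁/ε) − 1), J₂ = β₂·(ω·exp(β₂L₂/ε) − 0)/(exp(β₂L₂/ε) − 1) and J₃ = β₃·(ω·exp(β₃L₃/ε) − 0)/(exp(β₃L₃/ε) − 1). Then the flux continuity condition J₁ = J₂ + J₃ holds if and only if ω = [(ε/L₁)·B(−β₁L₁/ε)·1] / [(ε/L₁)·B(β₁L₁/ε) + (ε/L₂)·B(−β₂L₂/ε)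 + (ε/L₃)·B(−β₃L₃/ε)]; in particular the denominator is positive and ω is uniquely determined. -/
theorem aux_pos (ε β L : ℝ) (hε : 0 < ε) (hβ : 0 < β) (hL : 0 < L) :
    0 < Real.exp (β * L / ε) - 1 := by
  have h : 0 < β * L / ε := by positivity
  have := Real.one_lt_exp_iff.mpr h
  linarith

theorem aux_B_pos (ε β L : ℝ) (hε : 0 < ε) (hL : 0 < L) :
    ε / L * ((β * L / ε) / (Real.exp (β * L / ε) - 1)) = β / (Real.exp (β * L / ε) - 1) := by
  have h : ε / L * (β * L / ε) = β := by field_simp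
  rw [← mul_div_assoc, h]

theorem aux_B_neg (ε β L : ℝ) (hε : 0 < ε) (hβ : 0 < β) (hL : 0 < L) :
    ε / L * ((-(β * L) / ε) / (Real.exp (-(β * L) / ε) - 1)) =
      β * Real.exp (β * L / ε) / (Real.exp (β * L / ε) - 1) := by
  have h : ε / L * (-(β * L) / ε) = -β := by field_simp
  have hp := aux_pos ε β L hε hβ hL
  rw [← mul_div_assoc, h, neg_div ε (β * L), Real.exp_neg]
  have he := Real.exp_pos (β * L / ε)
  generalize Real.exp (β * L / ε) = e at *
  have h2 : e⁻¹ - 1 = -((e - 1) / e) := by field_simp; ring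
  rw [h2, neg_div_neg_eq, div_div_eq_mul_div]

/-- junction value on the three-segment network. Let `ε > 0`,
`β₁, β₂, β₃ > 0`, `L₁, L₂, L₃ > 0`, and let `B(x) = x/(exp x - 1)` be the inverse of the
Bernoulli function. For `ω ∈ ℝ` define the segment fluxes
`J₁ = β₁·(1·exp(β₁L₁/ε) - ω)/(exp(β₁L₁/ε) - 1)`,
`J₂ = β₂·(ω·exp(β₂L₂/ε) - 0)/(exp(β₂L₂/ε) - 1)`,
`J₃ = β₃·(ω·exp(β₃L₃/ε) - 0)/(exp(β₃L₃/ε) - 1)`.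
Then the flux continuity condition `J₁ = J₂ + J₃` holds if and only if
`ω = (ε/L₁·B(-β₁L₁/ε)·1) / (ε/L₁·B(β₁L₁/ε) + ε/L₂·B(-β₂L₂/ε) + ε/L₃·B(-β₃L₃/ε))`;
in particular the denominator is positive and `ω` is uniquely determined. -/
theorem junction_value_three_segment_network (ε β₁ β₂ β₃ L₁ L₂ L₃ : ℝ)
    (hε : 0 < ε) (hβ₁ : 0 < β₁) (hβ₂ : 0 < β₂) (hβ₃ : 0 < β₃)
    (hL₁ : 0 < L₁) (hL₂ : 0 < L₂) (hL₃ : 0 < L₃) :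
    let B : ℝ → ℝ := fun x => x / (Real.exp x - 1)
    let D : ℝ := ε / L₁ * B (β₁ * L₁ / ε) + ε / L₂ * B (-(β₂ * L₂) / ε)
      + ε / L₃ * B (-(β₃ * L₃) / ε)
    0 < D ∧
    ∀ ω : ℝ,
      (β₁ * (1 * Real.exp (β₁ * L₁ / ε) - ω) / (Real.exp (β₁ * L₁ / ε) - 1) =
        β₂ * (ω * Real.exp (β₂ * L₂ / ε) - 0) / (Real.exp (β₂ * L₂ / ε) - 1)
          + β₃ * (ω * Real.exp (β₃ * L₃ / ε) - 0) / (Real.exp (β₃ * L₃ / ε) - 1)) ↔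
      ω = (ε / L₁ * B (-(β₁ * L₁) / ε) * 1) / D := by
  intro B D
  have p1 := aux_pos ε β₁ L₁ hε hβ₁ hL₁
  have p2 := aux_pos ε β₂ L₂ hε hβ₂ hL₂
  have p3 := aux_pos ε β₃ L₃ hε hβ₃ hL₃
  have hN : ε / L₁ * B (-(β₁ * L₁) / ε) * 1 =
      β₁ * Real.exp (β₁ * L₁ / ε) / (Real.exp (β₁ * L₁ / ε) - 1) := by
    rw [mul_one]; exact aux_B_neg ε β₁ L₁ hε hβ₁ hL₁
  have hD : D = β₁ / (Real.exp (β₁ * L₁ / ε) - 1)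
      + β₂ * Real.exp (β₂ * L₂ / ε) / (Real.exp (β₂ * L₂ / ε) - 1)
      + β₃ * Real.exp (β₃ * L₃ / ε) / (Real.exp (β₃ * L₃ / ε) - 1) := by
    rw [← aux_B_pos ε β₁ L₁ hε hL₁, ← aux_B_neg ε β₂ L₂ hε hβ₂ hL₂,
      ← aux_B_neg ε β₃ L₃ hε hβ₃ hL₃]
  have hDpos : 0 < D := by
    rw [hD]
    have := Real.exp_pos (β₂ * L₂ / ε)
    have := Real.exp_pos (β₃ * L₃ / ε)
    exact add_pos (add_pos (div_pos hβ₁ p1) (div_pos (by positivity) p2))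
      (div_pos (by positivity) p3)
  refine ⟨hDpos, fun ω => ?_⟩
  rw [eq_div_iff hDpos.ne', hN, hD]
  constructor
  · intro h
    linear_combination -h
  · intro h
    linear_combination -h
end
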